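/- arXiv:2104.08309 — 2 statements merged into one kernel-verified Lean document; each statement's English description precedes it below -/
import Mathlib

section
/- Let Q = (Qx, Qy) ∈ ℝ² be nonzero, let r₀ = (x₀, y₀) and r₁ = (x₁, y₁) be points of ℝ² with d := r₁ − r₀ ≠ 0, and let n̂ := ((y₁−y₀)/|d|, (x₀−x₁)/|d|) be the unit normal to the segment. If Q·d ≠ 0, then the line integral of F·n̂ along the segment, namely ∫₀¹ (F(r₀ + t·d) · n̂) · |d| dt, equals (−(Q·n̂)·|d|/|Q|²) · (exp(i Q·r₁) − exp(i Q·r₀)) / (Q·d). -/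
/-- Let `Q = (Qx, Qy) ∈ ℝ²` be nonzero and define the complex
vector field `F(x,y) = (−i/(Qx²+Qy²)) · (Qx, Qy) · exp(i(Qx·x + Qy·y))`.
Let `r₀ = (x₀,y₀)`, `r₁ = (x₁,y₁)` with `d := r₁ − r₀ ≠ 0`, let
`n̂ := ((y₁−y₀)/|d|, (x₀−x₁)/|d|)` be the unit normal to the segment, and assume
`Q·d ≠ 0`.  Then `∫₀¹ (F(r₀ + t·d) · n̂) · |d| dt
 = (−(Q·n̂)·|d|/|Q|²) · (exp(i Q·r₁) − exp(i Q·r₀)) / (Q·d)`. -/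
theorem segment_line_integral_of_F (Qx Qy x₀ y₀ x₁ y₁ : ℝ)
    (hQ : (Qx, Qy) ≠ (0, 0)) (hd : (x₁, y₁) ≠ (x₀, y₀))
    (hQd : Qx * (x₁ - x₀) + Qy * (y₁ - y₀) ≠ 0)
    (len : ℝ) (hlen : len = Real.sqrt ((x₁ - x₀) ^ 2 + (y₁ - y₀) ^ 2)) :
    (∫ t in (0:ℝ)..1,
        ((-Complex.I / ((Qx ^ 2 + Qy ^ 2 : ℝ) : ℂ)) *
            ((Qx * ((y₁ - y₀) / len) + Qy * ((x₀ - x₁) / len) : ℝ) : ℂ) *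
            Complex.exp (Complex.I *
              ((Qx * (x₀ + t * (x₁ - x₀)) + Qy * (y₀ + t * (y₁ - y₀)) : ℝ) : ℂ))) *
          (len : ℂ)) =
      ((-(Qx * ((y₁ - y₀) / len) + Qy * ((x₀ - x₁) / len)) * len /
          (Qx ^ 2 + Qy ^ 2) : ℝ) : ℂ) *
        (Complex.exp (Complex.I * ((Qx * x₁ + Qy * y₁ : ℝ) : ℂ)) -
          Complex.exp (Complex.I * ((Qx * x₀ + Qy * y₀ : ℝ) : ℂ))) /
        ((Qx * (x₁ - x₀) + Qy * (y₁ - y₀) : ℝ) : ℂ) := by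
  have hc : Complex.I * ((Qx * (x₁ - x₀) + Qy * (y₁ - y₀) : ℝ) : ℂ) ≠ 0 :=
    mul_ne_zero Complex.I_ne_zero (Complex.ofReal_ne_zero.mpr hQd)
  have hc' : ((Qx * (x₁ - x₀) + Qy * (y₁ - y₀) : ℝ) : ℂ) ≠ 0 :=
    Complex.ofReal_ne_zero.mpr hQd
  have h1 : Complex.exp (Complex.I * ((Qx * x₁ + Qy * y₁ : ℝ) : ℂ)) =
      Complex.exp (Complex.I * ((Qx * x₀ + Qy * y₀ : ℝ) : ℂ)) *
      Complex.exp (Complex.I * ((Qx * (x₁ - x₀) + Qy * (y₁ - y₀) : ℝ) : ℂ)) := by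
    rw [← Complex.exp_add]
    congr 1
    push_cast
    ring
  have h2 : ∀ t : ℝ, ((-Complex.I / ((Qx ^ 2 + Qy ^ 2 : ℝ) : ℂ)) *
            ((Qx * ((y₁ - y₀) / len) + Qy * ((x₀ - x₁) / len) : ℝ) : ℂ) *
            Complex.exp (Complex.I *
              ((Qx * (x₀ + t * (x₁ - x₀)) + Qy * (y₀ + t * (y₁ - y₀)) : ℝ) : ℂ))) *
          (len : ℂ) =
      ((-Complex.I / ((Qx ^ 2 + Qy ^ 2 : ℝ) : ℂ)) *
            ((Qx * ((y₁ - y₀) / len) + Qy * ((x₀ - x₁) / len) : ℝ) : ℂ) * (len : ℂ) *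
        Complex.exp (Complex.I * ((Qx * x₀ + Qy * y₀ : ℝ) : ℂ))) *
      Complex.exp (Complex.I * ((Qx * (x₁ - x₀) + Qy * (y₁ - y₀) : ℝ) : ℂ) * (t : ℂ)) := by
    intro t
    have : Complex.exp (Complex.I *
              ((Qx * (x₀ + t * (x₁ - x₀)) + Qy * (y₀ + t * (y₁ - y₀)) : ℝ) : ℂ)) =
        Complex.exp (Complex.I * ((Qx * x₀ + Qy * y₀ : ℝ) : ℂ)) *
        Complex.exp (Complex.I * ((Qx * (x₁ - x₀) + Qy * (y₁ - y₀) : ℝ) : ℂ) * (t : ℂ)) := by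
      rw [← Complex.exp_add]
      congr 1
      push_cast
      ring
    rw [this]
    ring
  simp_rw [h2]
  rw [intervalIntegral.integral_const_mul, integral_exp_mul_complex hc, h1]
  rw [Complex.ofReal_div, Complex.ofReal_mul, Complex.ofReal_neg]
  generalize ((Qx * (x₁ - x₀) + Qy * (y₁ - y₀) : ℝ) : ℂ) = c at *
  generalize ((Qx * ((y₁ - y₀) / len) + Qy * ((x₀ - x₁) / len) : ℝ) : ℂ) = n
  generalize ((Qx ^ 2 + Qy ^ 2 : ℝ) : ℂ) = q
  generalize Complex.exp (Complex.I * ((Qx * x₀ + Qy * y₀ : ℝ) : ℂ)) = e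
  simp only [Complex.ofReal_one, Complex.ofReal_zero, mul_one, mul_zero, Complex.exp_zero]
  generalize Complex.exp (Complex.I * c) = f
  have hI : Complex.I * Complex.I⁻¹ = 1 := mul_inv_cancel₀ Complex.I_ne_zero
  simp only [div_eq_mul_inv, mul_inv]
  linear_combination (-(q⁻¹ * n * (len : ℂ) * e * (f - 1) * c⁻¹)) * hI
end

section
/- Let v₀, v₁, v₂ ∈ ℝ² be counterclockwise oriented, i.e. the determinant of (v₁ − v₀, v₂ − v₀) is positive, and let Q ∈ ℝ² be nonzero with Q·(v_{l+1} − v_l) ≠ 0 for each l = 0, 1, 2 (indices mod 3). Setting d_l := v_{l+1} − v_l and n̂_l := ((d_l)_y, −(d_l)_x)/|d_l|, the integral of exp(i Q·r) over the convex hull of {v₀, v₁, v₂} equals Σ_{l=0}^{2} (−(Q·n̂_l)·|d_l|/|Q|²) · (exp(i Q·v_{l+1}) − exp(i Q·v_l)) / (Q·d_l). -/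
/-- The closed-form contribution of the directed segment from `p` to `q` in the
vertex-sum formula: `(−(Q·n̂)·|d|/|Q|²) · (exp(i Q·q) − exp(i Q·p)) / (Q·d)` where
`d = q − p` and `n̂ = (d_y, −d_x)/|d|` is the outward unit normal. -/
noncomputable def segTerm2D (Qx Qy : ℝ) (p q : ℝ × ℝ) : ℂ :=
  let dx : ℝ := q.1 - p.1
  let dy : ℝ := q.2 - p.2
  let len : ℝ := Real.sqrt (dx ^ 2 + dy ^ 2)
  ((-(Qx * (dy / len) + Qy * (-dx / len)) * len / (Qx ^ 2 + Qy ^ 2) : ℝ) : ℂ) *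
    (Complex.exp (Complex.I * ((Qx * q.1 + Qy * q.2 : ℝ) : ℂ)) -
      Complex.exp (Complex.I * ((Qx * p.1 + Qy * p.2 : ℝ) : ℂ))) /
    ((Qx * dx + Qy * dy : ℝ) : ℂ)


def stdTri : Set (ℝ × ℝ) := {p | 0 ≤ p.1 ∧ 0 ≤ p.2 ∧ p.1 + p.2 ≤ 1}

theorem stdTri_closed : IsClosed stdTri := by
  have h1 : IsClosed {p : ℝ × ℝ | 0 ≤ p.1} := isClosed_le continuous_const continuous_fst
  have h2 : IsClosed {p : ℝ × ℝ | 0 ≤ p.2} := isClosed_le continuous_const continuous_snd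
  have h3 : IsClosed {p : ℝ × ℝ | p.1 + p.2 ≤ 1} :=
    isClosed_le (continuous_fst.add continuous_snd) continuous_const
  exact h1.inter (h2.inter h3)

theorem stdTri_compact : IsCompact stdTri := by
  refine IsCompact.of_isClosed_subset (isCompact_Icc (a := ((0:ℝ),(0:ℝ))) (b := (1,1)))
    stdTri_closed ?_
  rintro ⟨x, y⟩ ⟨h1, h2, h3⟩
  simp only at h1 h2 h3
  exact ⟨⟨h1, h2⟩, ⟨by simp only; linarith, by simp only; linarith⟩⟩

theorem stdTri_image (v₀ v₁ v₂ : ℝ × ℝ) :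
    convexHull ℝ {v₀, v₁, v₂} =
      (fun p : ℝ × ℝ => (v₀.1 + ((v₁.1 - v₀.1) * p.1 + (v₂.1 - v₀.1) * p.2),
        v₀.2 + ((v₁.2 - v₀.2) * p.1 + (v₂.2 - v₀.2) * p.2))) '' stdTri := by
  apply Set.Subset.antisymm
  · apply convexHull_min
    · rintro x (rfl | rfl | rfl)
      · exact ⟨(0, 0), by simp [stdTri], by simp⟩
      · exact ⟨(1, 0), by simp [stdTri], by simp⟩
      · exact ⟨(0, 1), by simp [stdTri], by simp⟩
    · rintro _ ⟨p, ⟨hp1, hp2, hp3⟩, rfl⟩ _ ⟨q, ⟨hq1, hq2, hq3⟩, rfl⟩ a b ha hb hab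
      refine ⟨a • p + b • q, ⟨?_, ?_, ?_⟩, ?_⟩
      · simp; positivity
      · simp; positivity
      · simp only [Prod.fst_add, Prod.snd_add, Prod.smul_fst, Prod.smul_snd, smul_eq_mul]
        nlinarith
      · obtain rfl : b = 1 - a := by linarith
        ext <;> simp <;> ring
  · rintro _ ⟨⟨s, t⟩, ⟨h1, h2, h3⟩, rfl⟩
    simp only at h1 h2 h3
    have hc := convex_convexHull ℝ ({v₀, v₁, v₂} : Set (ℝ × ℝ))
    have hs := subset_convexHull ℝ ({v₀, v₁, v₂} : Set (ℝ × ℝ))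
    have := hc.sum_mem (t := Finset.univ) (w := ![1 - s - t, s, t]) (z := ![v₀, v₁, v₂])
      (by intro i _; fin_cases i <;> simp <;> linarith)
      (by simp [Fin.sum_univ_three]; ring)
      (by intro i _; fin_cases i <;> apply hs <;> simp)
    convert this using 1
    ext <;> simp [Fin.sum_univ_three] <;> ring

theorem int_exp (c : ℝ) (hc : c ≠ 0) (u : ℝ) :
    ∫ t in (0:ℝ)..u, Complex.exp (Complex.I * c * t) =
      (Complex.exp (Complex.I * c * u) - 1) / (Complex.I * c) := by
  rw [integral_exp_mul_complex (by simp [hc])]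
  simp

theorem stdTri_integral (α β : ℝ) (hα : α ≠ 0) (hβ : β ≠ 0) (hαβ : α - β ≠ 0) :
    ∫ p in stdTri, Complex.exp (Complex.I * α * p.1) * Complex.exp (Complex.I * β * p.2) =
      1 / (Complex.I * β) * ((Complex.exp (Complex.I * α) - Complex.exp (Complex.I * β)) /
        (Complex.I * (α - β)) - (Complex.exp (Complex.I * α) - 1) / (Complex.I * α)) := by
  have hm : MeasurableSet stdTri := stdTri_closed.measurableSet
  have hint : MeasureTheory.IntegrableOn (fun p : ℝ × ℝ =>
      Complex.exp (Complex.I * α * p.1) * Complex.exp (Complex.I * β * p.2)) stdTri :=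
    ContinuousOn.integrableOn_compact stdTri_compact (by fun_prop)
  rw [← MeasureTheory.integral_indicator hm, MeasureTheory.Measure.volume_eq_prod,
    MeasureTheory.integral_prod]
  swap
  · rw [← MeasureTheory.Measure.volume_eq_prod]
    exact (MeasureTheory.integrable_indicator_iff hm).2 hint
  have h1 : ∀ s : ℝ, (∫ t : ℝ, stdTri.indicator (fun p : ℝ × ℝ =>
      Complex.exp (Complex.I * α * p.1) * Complex.exp (Complex.I * β * p.2)) (s, t)) =
      (Set.Icc (0:ℝ) 1).indicator (fun s : ℝ => 1 / (Complex.I * β) *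
        (Complex.exp (Complex.I * β) * Complex.exp (Complex.I * (α - β : ℝ) * s)
          - Complex.exp (Complex.I * α * s))) s := by
    intro s
    by_cases hs : s ∈ Set.Icc (0:ℝ) 1
    · rw [Set.indicator_of_mem hs]
      have : (fun t : ℝ => stdTri.indicator (fun p : ℝ × ℝ =>
          Complex.exp (Complex.I * α * p.1) * Complex.exp (Complex.I * β * p.2)) (s, t)) =
          (Set.Icc (0:ℝ) (1 - s)).indicator (fun t : ℝ =>
            Complex.exp (Complex.I * α * s) * Complex.exp (Complex.I * β * t)) := by
        ext t
        have : (s, t) ∈ stdTri ↔ t ∈ Set.Icc (0:ℝ) (1 - s) := by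
          simp only [stdTri, Set.mem_ofPred_eq, Set.mem_Icc]
          constructor
          · rintro ⟨_, h, h'⟩
            exact ⟨h, by linarith⟩
          · rintro ⟨h, h'⟩
            exact ⟨hs.1, h, by linarith⟩
        simp only [Set.indicator, this]
      rw [this, MeasureTheory.integral_indicator measurableSet_Icc,
        MeasureTheory.integral_Icc_eq_integral_Ioc,
        ← intervalIntegral.integral_of_le (by linarith [hs.2]),
        intervalIntegral.integral_const_mul, int_exp β hβ]
      have e1 : Complex.exp (Complex.I * β) * Complex.exp (Complex.I * (α - β : ℝ) * s) =
          Complex.exp (Complex.I * α * s) * Complex.exp (Complex.I * β * (1 - s : ℝ)) := by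
        rw [← Complex.exp_add, ← Complex.exp_add]
        congr 1
        push_cast
        ring
      rw [e1]
      ring
    · rw [Set.indicator_of_notMem hs]
      have : ∀ t : ℝ, (s, t) ∉ stdTri := by
        rintro t ⟨h1, h2, h3⟩
        simp only at h1 h2 h3
        exact hs ⟨h1, by linarith⟩
      simp [Set.indicator, this]
  simp_rw [h1]
  rw [MeasureTheory.integral_indicator measurableSet_Icc,
    MeasureTheory.integral_Icc_eq_integral_Ioc,
    ← intervalIntegral.integral_of_le zero_le_one,
    intervalIntegral.integral_const_mul, intervalIntegral.integral_sub
      (Continuous.intervalIntegrable (by fun_prop) _ _)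
      (Continuous.intervalIntegrable (by fun_prop) _ _),
    intervalIntegral.integral_const_mul, int_exp _ hαβ, int_exp _ hα]
  have e2 : Complex.exp (Complex.I * α) =
      Complex.exp (Complex.I * β) * Complex.exp (Complex.I * (α - β : ℝ)) := by
    rw [← Complex.exp_add]
    congr 1
    push_cast
    ring
  rw [Complex.ofReal_one, mul_one, mul_one, e2]
  push_cast
  ring

theorem segTerm_eq (Qx Qy : ℝ) (p q : ℝ × ℝ)
    (h : Qx * (q.1 - p.1) + Qy * (q.2 - p.2) ≠ 0) :
    segTerm2D Qx Qy p q =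
      (-(Qx * (q.2 - p.2) - Qy * (q.1 - p.1)) / (Qx ^ 2 + Qy ^ 2)) *
    (Complex.exp (Complex.I * ((Qx * q.1 + Qy * q.2 : ℝ) : ℂ)) -
      Complex.exp (Complex.I * ((Qx * p.1 + Qy * p.2 : ℝ) : ℂ))) /
    (Qx * (q.1 - p.1) + Qy * (q.2 - p.2)) := by
  have hl : Real.sqrt ((q.1 - p.1) ^ 2 + (q.2 - p.2) ^ 2) ≠ 0 := by
    apply ne_of_gt
    apply Real.sqrt_pos.2
    by_contra hn
    have h1 : q.1 - p.1 = 0 := by nlinarith [sq_nonneg (q.1 - p.1), sq_nonneg (q.2 - p.2)]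
    have h2 : q.2 - p.2 = 0 := by nlinarith [sq_nonneg (q.1 - p.1), sq_nonneg (q.2 - p.2)]
    apply h
    rw [h1, h2]
    ring
  have : -(Qx * ((q.2 - p.2) / Real.sqrt ((q.1 - p.1) ^ 2 + (q.2 - p.2) ^ 2)) +
      Qy * (-(q.1 - p.1) / Real.sqrt ((q.1 - p.1) ^ 2 + (q.2 - p.2) ^ 2))) *
      Real.sqrt ((q.1 - p.1) ^ 2 + (q.2 - p.2) ^ 2) / (Qx ^ 2 + Qy ^ 2) =
      -(Qx * (q.2 - p.2) - Qy * (q.1 - p.1)) / (Qx ^ 2 + Qy ^ 2) := by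
    congr 1
    field_simp
    ring
  unfold segTerm2D
  simp only [this]
  push_cast
  rfl

/-- Let `v₀, v₁, v₂ ∈ ℝ²` be counterclockwise oriented
(`det(v₁ − v₀, v₂ − v₀) > 0`), and let `Q = (Qx, Qy) ∈ ℝ²` be nonzero with
`Q·(v_{l+1} − v_l) ≠ 0` for each of the three directed edges.  Then the integral
of `exp(i Q·r)` over the closed triangle `conv{v₀, v₁, v₂}` (with respect to
Lebesgue measure on `ℝ²`) equals the sum over the three directed edges of
`(−(Q·n̂_l)·|d_l|/|Q|²) · (exp(i Q·v_{l+1}) − exp(i Q·v_l)) / (Q·d_l)`. -/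
theorem triangle_fourier_transform_vertex_sum (v₀ v₁ v₂ : ℝ × ℝ) (Qx Qy : ℝ)
    (hccw : 0 < (v₁.1 - v₀.1) * (v₂.2 - v₀.2) - (v₁.2 - v₀.2) * (v₂.1 - v₀.1))
    (hQ : (Qx, Qy) ≠ (0, 0))
    (hQd₀ : Qx * (v₁.1 - v₀.1) + Qy * (v₁.2 - v₀.2) ≠ 0)
    (hQd₁ : Qx * (v₂.1 - v₁.1) + Qy * (v₂.2 - v₁.2) ≠ 0)
    (hQd₂ : Qx * (v₀.1 - v₂.1) + Qy * (v₀.2 - v₂.2) ≠ 0) :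
    (∫ r in convexHull ℝ {v₀, v₁, v₂},
        Complex.exp (Complex.I * ((Qx * r.1 + Qy * r.2 : ℝ) : ℂ))) =
      segTerm2D Qx Qy v₀ v₁ + segTerm2D Qx Qy v₁ v₂ + segTerm2D Qx Qy v₂ v₀ := by
  set a₁ := v₁.1 - v₀.1 with ha₁
  set a₂ := v₁.2 - v₀.2 with ha₂
  set b₁ := v₂.1 - v₀.1 with hb₁
  set b₂ := v₂.2 - v₀.2 with hb₂
  rw [segTerm_eq _ _ _ _ hQd₀, segTerm_eq _ _ _ _ hQd₁, segTerm_eq _ _ _ _ hQd₂]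
  rw [stdTri_image]
  have hder : ∀ x ∈ stdTri, HasFDerivWithinAt
      (fun p : ℝ × ℝ => (v₀.1 + (a₁ * p.1 + b₁ * p.2), v₀.2 + (a₂ * p.1 + b₂ * p.2)))
      (LinearMap.toContinuousLinearMap (Matrix.toLin (Module.Basis.finTwoProd ℝ)
        (Module.Basis.finTwoProd ℝ) !![a₁, b₁; a₂, b₂])) stdTri x := by
    intro x _
    rw [Matrix.toLin_finTwoProd_toContinuousLinearMap]
    apply HasFDerivAt.hasFDerivWithinAt
    apply HasFDerivAt.prodMk
    · exact ((hasFDerivAt_fst.const_mul a₁).add (hasFDerivAt_snd.const_mul b₁)).const_add _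
    · exact ((hasFDerivAt_fst.const_mul a₂).add (hasFDerivAt_snd.const_mul b₂)).const_add _
  have hinj : Set.InjOn
      (fun p : ℝ × ℝ => (v₀.1 + (a₁ * p.1 + b₁ * p.2), v₀.2 + (a₂ * p.1 + b₂ * p.2))) stdTri := by
    rintro ⟨s, t⟩ _ ⟨s', t'⟩ _ h
    simp only [Prod.mk.injEq] at h
    obtain ⟨h1, h2⟩ := h
    have e1 : (a₁ * b₂ - a₂ * b₁) * (s - s') = 0 := by linear_combination b₂ * h1 - b₁ * h2
    have e2 : (a₁ * b₂ - a₂ * b₁) * (t - t') = 0 := by linear_combination a₁ * h2 - a₂ * h1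
    have e3 := (mul_eq_zero.1 e1).resolve_left hccw.ne'
    have e4 := (mul_eq_zero.1 e2).resolve_left hccw.ne'
    ext <;> simp only <;> linarith
  rw [MeasureTheory.integral_image_eq_integral_abs_det_fderiv_smul MeasureTheory.volume
    stdTri_closed.measurableSet hder hinj]
  have hdet : |(LinearMap.toContinuousLinearMap (Matrix.toLin (Module.Basis.finTwoProd ℝ)
        (Module.Basis.finTwoProd ℝ) !![a₁, b₁; a₂, b₂])).det| = a₁ * b₂ - a₂ * b₁ := by
    rw [LinearMap.det_toContinuousLinearMap, LinearMap.det_toLin, Matrix.det_fin_two_of,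
      mul_comm b₁, abs_of_pos hccw]
  simp only [hdet]
  have hβ : Qx * b₁ + Qy * b₂ ≠ 0 := by
    intro h
    apply hQd₂
    rw [hb₁, hb₂] at h
    linarith
  have hαβ : (Qx * a₁ + Qy * a₂) - (Qx * b₁ + Qy * b₂) ≠ 0 := by
    intro h
    apply hQd₁
    rw [hb₁, hb₂, ha₁, ha₂] at h
    linarith
  have hfun : ∀ p : ℝ × ℝ, (a₁ * b₂ - a₂ * b₁) • Complex.exp (Complex.I *
      ((Qx * (v₀.1 + (a₁ * p.1 + b₁ * p.2)) + Qy * (v₀.2 + (a₂ * p.1 + b₂ * p.2)) : ℝ) : ℂ)) =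
      (((a₁ * b₂ - a₂ * b₁ : ℝ) : ℂ) * Complex.exp (Complex.I * ((Qx * v₀.1 + Qy * v₀.2 : ℝ) : ℂ))) *
      (Complex.exp (Complex.I * (Qx * a₁ + Qy * a₂ : ℝ) * p.1) *
        Complex.exp (Complex.I * (Qx * b₁ + Qy * b₂ : ℝ) * p.2)) := by
    intro p
    rw [Complex.real_smul, mul_assoc, ← Complex.exp_add, ← Complex.exp_add]
    congr 2
    push_cast
    ring
  simp_rw [hfun]
  rw [MeasureTheory.integral_const_mul, stdTri_integral _ _ hQd₀ hβ hαβ]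
  have hE1 : Complex.exp (Complex.I * ((Qx * v₁.1 + Qy * v₁.2 : ℝ) : ℂ)) =
      Complex.exp (Complex.I * ((Qx * v₀.1 + Qy * v₀.2 : ℝ) : ℂ)) *
      Complex.exp (Complex.I * (Qx * a₁ + Qy * a₂ : ℝ)) := by
    rw [← Complex.exp_add, ha₁, ha₂]
    congr 1
    push_cast
    ring
  have hE2 : Complex.exp (Complex.I * ((Qx * v₂.1 + Qy * v₂.2 : ℝ) : ℂ)) =
      Complex.exp (Complex.I * ((Qx * v₀.1 + Qy * v₀.2 : ℝ) : ℂ)) *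
      Complex.exp (Complex.I * (Qx * b₁ + Qy * b₂ : ℝ)) := by
    rw [← Complex.exp_add, hb₁, hb₂]
    congr 1
    push_cast
    ring
  rw [hE1, hE2]
  generalize Complex.exp (Complex.I * ((Qx * v₀.1 + Qy * v₀.2 : ℝ) : ℂ)) = E0
  generalize Complex.exp (Complex.I * (Qx * a₁ + Qy * a₂ : ℝ)) = E1
  generalize Complex.exp (Complex.I * (Qx * b₁ + Qy * b₂ : ℝ)) = E2
  have r1 : (v₁.1 : ℂ) - v₀.1 = a₁ := by rw [ha₁]; push_cast; rfl
  have r2 : (v₁.2 : ℂ) - v₀.2 = a₂ := by rw [ha₂]; push_cast; rfl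
  have r3 : (v₂.1 : ℂ) - v₁.1 = b₁ - a₁ := by rw [ha₁, hb₁]; push_cast; ring
  have r4 : (v₂.2 : ℂ) - v₁.2 = b₂ - a₂ := by rw [ha₂, hb₂]; push_cast; ring
  have r5 : (v₀.1 : ℂ) - v₂.1 = -b₁ := by rw [hb₁]; push_cast; ring
  have r6 : (v₀.2 : ℂ) - v₂.2 = -b₂ := by rw [hb₂]; push_cast; ring
  rw [r1, r2, r3, r4, r5, r6]
  have hN : Qx ^ 2 + Qy ^ 2 ≠ 0 := by
    intro h
    apply hQ
    have h1 : Qx = 0 := by nlinarith [sq_nonneg Qx, sq_nonneg Qy]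
    have h2 : Qy = 0 := by nlinarith [sq_nonneg Qx, sq_nonneg Qy]
    rw [h1, h2]
  have n1 : (Qx : ℂ) ^ 2 + Qy ^ 2 ≠ 0 := by exact_mod_cast hN
  have n2 : (Qx : ℂ) * a₁ + Qy * a₂ ≠ 0 := by exact_mod_cast hQd₀
  have n3 : (Qx : ℂ) * b₁ + Qy * b₂ ≠ 0 := by exact_mod_cast hβ
  have n4 : ((Qx : ℂ) * a₁ + Qy * a₂) - (Qx * b₁ + Qy * b₂) ≠ 0 := by exact_mod_cast hαβ
  push_cast
  have m1 : (Qx : ℂ) * (b₁ - a₁) + Qy * (b₂ - a₂) =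
    -(((Qx : ℂ) * a₁ + Qy * a₂) - (Qx * b₁ + Qy * b₂)) := by ring
  have m2 : (Qx : ℂ) * -b₁ + Qy * -b₂ = -(Qx * b₁ + Qy * b₂) := by ring
  rw [m1, m2]
  generalize (Qx : ℂ) = X at *
  generalize (Qy : ℂ) = Y at *
  generalize (a₁ : ℂ) = A at *
  generalize (a₂ : ℂ) = B at *
  generalize (b₁ : ℂ) = C at *
  generalize (b₂ : ℂ) = D at *
  have key : (A * D - B * C) * E0 * (1 / (Complex.I * (X * C + Y * D)) *
      ((E1 - E2) / (Complex.I * (X * A + Y * B - (X * C + Y * D))) -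
        (E1 - 1) / (Complex.I * (X * A + Y * B)))) =
      - ((A * D - B * C) * E0 * (1 / (X * C + Y * D) *
      ((E1 - E2) / (X * A + Y * B - (X * C + Y * D)) -
        (E1 - 1) / (X * A + Y * B)))) := by
    have hI : Complex.I⁻¹ * Complex.I⁻¹ = -1 := by simp
    simp only [div_eq_mul_inv, mul_inv]
    linear_combination ((A * D - B * C) * E0 * ((X * C + Y * D)⁻¹ *
      ((E1 - E2) * (X * A + Y * B - (X * C + Y * D))⁻¹ -
        (E1 - 1) * (X * A + Y * B)⁻¹))) * hI
  rw [key]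
  clear key m1 m2
  generalize hW : X * A + Y * B - (X * C + Y * D) = W at *
  generalize hU : X * A + Y * B = U at *
  generalize hV : X * C + Y * D = V at *
  generalize hN' : X ^ 2 + Y ^ 2 = N at *
  field_simp
  rw [← hW, ← hN', ← hU, ← hV]
  ring
end
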